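/- Let μ be the probability measure on ℝⁿ with density proportional to exp(−V(x) − Σ_{i<j} W(x_i − x_j)), where V : ℝⁿ → ℝ is ρ-convex for some ρ > 0 and W : ℝ → ℝ ∪ {+∞} is convex with domain (0,∞), and assume the normalizing constant is finite. Then for every Lipschitz function f : ℝ → ℝ and every r > 0, the linear statistics L_n(f)(x) = (1/n) Σ_{i=1}^n f(x_i) satisfies μ(|L_n(f) − ∫ L_n(f) dμ| ≥ r) ≤ 2 exp(−n ρ r² / (2 ‖f‖_Lip²)). -/

import Mathlib

/-!
The Gibbs density `p = e^{-U} 1_D / Z` is strongly log-concave: the chamber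
`D = {x₁ > x₂ > … > xₙ}` is convex, and on it `U` is `ρ`-convex, the interaction being a sum of
convex functions of linear forms. The linear statistic `L_n(f)` is Lipschitz for the Euclidean norm
with constant `c = K / √n`, so it suffices to show that a `c`-Lipschitz function `F` satisfies
`∫ e^{l (F - ∫ F dμ)} dμ ≤ e^{l² c² / (2ρ)}` for all real `l`; Chernoff's bound for `F` and `-F`
concludes.

The bound on the Laplace transform comes from the Prékopa–Leindler inequality. With weights `t` and
`s = 1 - t`, the `ρ`-convexity of `U` gains a factor `e^{ρ t s |x - y|² / 2}`, which absorbs the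
oscillation of a Lipschitz function, and one gets
`(∫ e^F dμ)^t ≤ e^{t s c² / (2ρ)} ∫ e^{t F} dμ` (`StronglyLogConcave.mgf_rpow_le`).
Taking logarithms, dividing by `t` and letting `t → 0` gives
`log ∫ e^F dμ ≤ ∫ F dμ + c² / (2ρ)` (`StronglyLogConcave.cgf_one_le`), which is the sharp bound
after replacing `F` by `l F`. The integrability of `e^F` is another instance of Prékopa–Leindler
(`StronglyLogConcave.integrable_exp`).

The Prékopa–Leindler inequality (`prekopaLeindler_euclideanSpace`) follows on the line from the
one-dimensional Brunn–Minkowski inequality for superlevel sets and the layer-cake formula, and in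
higher dimension by induction through Tonelli's theorem (`PrekopaLeindler.prod`).
-/

open MeasureTheory Real Set
open scoped ENNReal BigOperators NNReal

/-! ### The Prékopa–Leindler inequality -/

section PrekopaLeindler

open scoped Pointwise

/-- The Brunn–Minkowski inequality on the line for compact sets: the translates `K + min L` and
`max K + L` both lie in `K + L` and meet in a single point. -/
lemma volume_add_le_of_isCompact {K L C : Set ℝ} (hK : IsCompact K) (hL : IsCompact L)
    (hKne : K.Nonempty) (hLne : L.Nonempty) (h : ∀ a ∈ K, ∀ b ∈ L, a + b ∈ C) :
    volume K + volume L ≤ volume C := by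
  obtain ⟨k, hk, hkmax⟩ := hK.exists_isMaxOn hKne continuousOn_id
  obtain ⟨l, hl, hlmin⟩ := hL.exists_isMinOn hLne continuousOn_id
  have hKk : ∀ a ∈ K, a ≤ k := fun a ha => hkmax ha
  have hLl : ∀ b ∈ L, l ≤ b := fun b hb => hlmin hb
  have h1 : volume K ≤ volume (C ∩ Iic (k + l)) := by
    calc volume K = volume ((fun x => x + l) '' K) := by simp
      _ ≤ _ := by
        apply measure_mono
        rintro _ ⟨a, ha, rfl⟩
        exact ⟨h a ha l hl, by simpa using hKk a ha⟩
  have h2 : volume L ≤ volume (C \ Iic (k + l)) := by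
    calc volume L = volume ((fun x => k + x) '' L) := by simp
      _ ≤ volume ((C \ Iic (k + l)) ∪ {k + l}) := by
        apply measure_mono
        rintro _ ⟨b, hb, rfl⟩
        by_cases hb' : b = l
        · right; simp [hb']
        · left
          refine ⟨h k hk b hb, ?_⟩
          have := lt_of_le_of_ne (hLl b hb) (Ne.symm hb')
          simpa using this
      _ ≤ volume (C \ Iic (k + l)) + volume {k + l} := measure_union_le _ _
      _ = _ := by simp
  calc volume K + volume L ≤ _ := add_le_add h1 h2
    _ = volume C := measure_inter_add_sdiff C measurableSet_Iic

lemma volume_add_le {A B C : Set ℝ} (hA : MeasurableSet A) (hB : MeasurableSet B)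
    (hAne : A.Nonempty) (hBne : B.Nonempty) (h : ∀ a ∈ A, ∀ b ∈ B, a + b ∈ C) :
    volume A + volume B ≤ volume C := by
  obtain ⟨a₀, ha₀⟩ := hAne
  obtain ⟨b₀, hb₀⟩ := hBne
  rw [hA.measure_eq_iSup_isCompact, hB.measure_eq_iSup_isCompact]
  simp only [iSup_and']
  refine ENNReal.biSup_add_biSup_le' (p := fun K => K ⊆ A ∧ IsCompact K)
    (q := fun L => L ⊆ B ∧ IsCompact L) ⟨∅, by simp⟩ ⟨∅, by simp⟩ ?_
  rintro K ⟨hKA, hK⟩ L ⟨hLB, hL⟩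
  -- Adjoining one point makes the compact sets nonempty.
  calc volume K + volume L ≤ volume (insert a₀ K) + volume (insert b₀ L) :=
        add_le_add (measure_mono (subset_insert _ _)) (measure_mono (subset_insert _ _))
    _ ≤ volume C := volume_add_le_of_isCompact (hK.insert a₀) (hL.insert b₀)
        (insert_nonempty _ _) (insert_nonempty _ _) fun a ha b hb =>
          h a (insert_subset ha₀ hKA ha) b (insert_subset hb₀ hLB hb)

lemma volume_convexComb_le {A B C : Set ℝ} {t s : ℝ} (ht : 0 < t) (hs : 0 < s)
    (hA : MeasurableSet A) (hB : MeasurableSet B)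
    (hAne : A.Nonempty) (hBne : B.Nonempty) (h : ∀ a ∈ A, ∀ b ∈ B, t * a + s * b ∈ C) :
    ENNReal.ofReal t * volume A + ENNReal.ofReal s * volume B ≤ volume C := by
  have hscale : ∀ (r : ℝ) (S : Set ℝ), 0 < r → volume (r • S) = ENNReal.ofReal r * volume S := by
    intro r S hr
    simp [Measure.addHaar_smul, abs_of_pos hr]
  rw [← hscale t A ht, ← hscale s B hs]
  refine volume_add_le (hA.const_smul_of_ne_zero ht.ne') (hB.const_smul_of_ne_zero hs.ne')
    hAne.smul_set hBne.smul_set ?_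
  rintro _ ⟨a, ha, rfl⟩ _ ⟨b, hb, rfl⟩
  exact h a ha b hb

lemma ENNReal.geom_mean_le_arith_mean {t s : ℝ} (ht : 0 < t) (hs : 0 < s) (hts : t + s = 1)
    (a b : ℝ≥0∞) : a ^ t * b ^ s ≤ ENNReal.ofReal t * a + ENNReal.ofReal s * b := by
  have hpq : (t⁻¹).HolderConjugate s⁻¹ := by
    rw [Real.holderConjugate_iff]
    exact ⟨(one_lt_inv₀ ht).2 (by linarith), by simpa using hts⟩
  have := ENNReal.young_inequality (a ^ t) (b ^ s) hpq
  rw [← ENNReal.rpow_mul, ← ENNReal.rpow_mul, mul_inv_cancel₀ ht.ne', mul_inv_cancel₀ hs.ne',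
    ENNReal.rpow_one, ENNReal.rpow_one, ENNReal.ofReal_inv_of_pos ht, ENNReal.ofReal_inv_of_pos hs,
    div_eq_mul_inv, div_eq_mul_inv, inv_inv, inv_inv, mul_comm a, mul_comm b] at this
  exact this

/-- The layer-cake formula, for `ℝ≥0∞`-valued functions bounded by one. -/
lemma lintegral_eq_volume_lt {f : ℝ → ℝ≥0∞} (hf : Measurable f) (h1 : ∀ x, f x ≤ 1) :
    ∫⁻ x, f x = ∫⁻ l in Ioi (0 : ℝ), volume {x | l < (f x).toReal} := by
  rw [← lintegral_eq_lintegral_meas_lt volume (Filter.Eventually.of_forall fun x => by simp)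
    hf.ennreal_toReal.aemeasurable]
  exact lintegral_congr fun x => (ENNReal.ofReal_toReal ((h1 x).trans_lt (by simp)).ne).symm

/-- When both suprema equal one, all superlevel sets at levels below one are nonempty, so the
one-dimensional Brunn–Minkowski inequality applies to them. Integrating over the levels gives the
arithmetic-mean bound `t ∫ u + s ∫ v ≤ ∫ h`, which is stronger than the claim. -/
lemma prekopaLeindler_real_of_le_one {t s : ℝ} (ht : 0 < t) (hs : 0 < s) (hts : t + s = 1)
    {u v h : ℝ → ℝ≥0∞} (hu : Measurable u) (hv : Measurable v) (hh : Measurable h)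
    (hu1 : ⨆ x, u x = 1) (hv1 : ⨆ x, v x = 1)
    (H : ∀ x y, u x ^ t * v y ^ s ≤ h (t * x + s * y)) :
    (∫⁻ x, u x) ^ t * (∫⁻ x, v x) ^ s ≤ ∫⁻ x, h x := by
  have hule : ∀ x, u x ≤ 1 := fun x => hu1 ▸ le_iSup u x
  have hvle : ∀ x, v x ≤ 1 := fun x => hv1 ▸ le_iSup v x
  have hlt_iff : ∀ {w : ℝ≥0∞} {l : ℝ}, w ≤ 1 → 0 < l → (l < w.toReal ↔ ENNReal.ofReal l < w) := by
    intro w l hw hl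
    exact (ENNReal.ofReal_lt_iff_lt_toReal hl.le (hw.trans_lt (by simp)).ne).symm
  refine (ENNReal.geom_mean_le_arith_mean ht hs hts _ _).trans ?_
  -- `h` may be infinite; cutting it at level one keeps the hypothesis, since `u, v ≤ 1`.
  calc _ ≤ ∫⁻ x, min (h x) 1 := ?_
    _ ≤ ∫⁻ x, h x := lintegral_mono fun x => min_le_left _ _
  rw [lintegral_eq_volume_lt hu hule, lintegral_eq_volume_lt hv hvle,
    lintegral_eq_volume_lt (hh.min measurable_const) (fun x => min_le_right _ _),
    ← lintegral_const_mul' _ _ (by simp), ← lintegral_const_mul' _ _ (by simp)]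
  refine (le_lintegral_add _ _).trans (setLIntegral_mono' measurableSet_Ioi fun l hl => ?_)
  have hl : 0 < l := hl
  rcases lt_or_ge l 1 with hl1 | hl1
  · have hl1' : ENNReal.ofReal l < 1 := by simpa using hl1
    refine volume_convexComb_le ht hs
      (measurableSet_lt measurable_const hu.ennreal_toReal)
      (measurableSet_lt measurable_const hv.ennreal_toReal) ?_ ?_ ?_
    · obtain ⟨x, hx⟩ := lt_iSup_iff.1 (hu1 ▸ hl1')
      exact ⟨x, (hlt_iff (hule x) hl).2 hx⟩
    · obtain ⟨x, hx⟩ := lt_iSup_iff.1 (hv1 ▸ hl1')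
      exact ⟨x, (hlt_iff (hvle x) hl).2 hx⟩
    · intro x hx y hy
      have hx := (hlt_iff (hule x) hl).1 hx
      have hy := (hlt_iff (hvle y) hl).1 hy
      refine (hlt_iff (min_le_right _ _) hl).2 (lt_min ?_ hl1')
      refine lt_of_lt_of_le ?_ (H x y)
      calc ENNReal.ofReal l = ENNReal.ofReal l ^ t * ENNReal.ofReal l ^ s := by
            rw [← ENNReal.rpow_add _ _ (by simpa using hl) (by simp), hts, ENNReal.rpow_one]
        _ < u x ^ t * v y ^ s :=
            ENNReal.mul_lt_mul (ENNReal.rpow_lt_rpow hx ht) (ENNReal.rpow_lt_rpow hy hs)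
  · have hempty : ∀ w : ℝ → ℝ≥0∞, (∀ x, w x ≤ 1) → {x | l < (w x).toReal} = ∅ := by
      intro w hw
      ext x
      have : (w x).toReal ≤ 1 := ENNReal.toReal_le_of_le_ofReal zero_le_one (by simpa using hw x)
      simp only [mem_ofPred_eq, mem_empty_iff_false, iff_false, not_lt]
      linarith
    rw [hempty u hule, hempty v hvle]
    simp

lemma prekopaLeindler_real_of_bdd {t s : ℝ} (ht : 0 < t) (hs : 0 < s) (hts : t + s = 1)
    {u v h : ℝ → ℝ≥0∞} (hu : Measurable u) (hv : Measurable v) (hh : Measurable h)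
    (hu1 : ⨆ x, u x ≠ ∞) (hv1 : ⨆ x, v x ≠ ∞)
    (H : ∀ x y, u x ^ t * v y ^ s ≤ h (t * x + s * y)) :
    (∫⁻ x, u x) ^ t * (∫⁻ x, v x) ^ s ≤ ∫⁻ x, h x := by
  set a := ⨆ x, u x with ha
  set b := ⨆ x, v x with hb
  by_cases ha0 : a = 0
  · have : ∀ x, u x = 0 := by simpa [ha] using ha0
    simp [this, ht]
  by_cases hb0 : b = 0
  · have : ∀ x, v x = 0 := by simpa [hb] using hb0
    simp [this, hs]
  have hat0 : a ^ t ≠ 0 := by simp [ENNReal.rpow_eq_zero_iff, ha0, hu1]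
  have hbs0 : b ^ s ≠ 0 := by simp [ENNReal.rpow_eq_zero_iff, hb0, hv1]
  have hat : a ^ t ≠ ∞ := ENNReal.rpow_ne_top_of_nonneg ht.le hu1
  have hbs : b ^ s ≠ ∞ := ENNReal.rpow_ne_top_of_nonneg hs.le hv1
  have key := prekopaLeindler_real_of_le_one ht hs hts (u := fun x => a⁻¹ * u x)
    (v := fun x => b⁻¹ * v x) (h := fun x => (a ^ t * b ^ s)⁻¹ * h x)
    (hu.const_mul _) (hv.const_mul _) (hh.const_mul _)
    (by rw [← ENNReal.mul_iSup]; exact ENNReal.inv_mul_cancel ha0 hu1)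
    (by rw [← ENNReal.mul_iSup]; exact ENNReal.inv_mul_cancel hb0 hv1)
    (fun x y => by
      rw [ENNReal.mul_rpow_of_nonneg _ _ ht.le, ENNReal.mul_rpow_of_nonneg _ _ hs.le,
        ENNReal.inv_rpow, ENNReal.inv_rpow, mul_mul_mul_comm,
        ← ENNReal.mul_inv (Or.inl hat0) (Or.inl hat)]
      gcongr
      exact H x y)
  rw [lintegral_const_mul _ hu, lintegral_const_mul _ hv, lintegral_const_mul _ hh,
    ENNReal.mul_rpow_of_nonneg _ _ ht.le, ENNReal.mul_rpow_of_nonneg _ _ hs.le,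
    ENNReal.inv_rpow, ENNReal.inv_rpow, mul_mul_mul_comm,
    ← ENNReal.mul_inv (Or.inl hat0) (Or.inl hat)] at key
  exact (ENNReal.mul_le_mul_iff_right (ENNReal.inv_ne_zero.2 (ENNReal.mul_ne_top hat hbs))
    (ENNReal.inv_ne_top.2 (mul_ne_zero hat0 hbs0))).1 key

/-- The Prékopa–Leindler inequality on `E` with weights `t`, `s` (meant to be positive with
`t + s = 1`), for `ℝ≥0∞`-valued functions. Infinite values are allowed so that the property can be
applied to marginals; with positive exponents the convention `0 * ∞ = 0` is harmless. -/
def PrekopaLeindler (E : Type*) [AddCommGroup E] [Module ℝ E] [MeasureSpace E] (t s : ℝ) : Prop :=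
  ∀ u v h : E → ℝ≥0∞, Measurable u → Measurable v → Measurable h →
    (∀ x y, u x ^ t * v y ^ s ≤ h (t • x + s • y)) →
    (∫⁻ x, u x) ^ t * (∫⁻ x, v x) ^ s ≤ ∫⁻ x, h x

lemma prekopaLeindler_real {t s : ℝ} (ht : 0 < t) (hs : 0 < s) (hts : t + s = 1) :
    PrekopaLeindler ℝ t s := by
  intro u v h hu hv hh H
  have hlim : ∀ w : ℝ → ℝ≥0∞, Measurable w →
      Filter.Tendsto (fun k : ℕ => ∫⁻ x, min (w x) k) Filter.atTop (nhds (∫⁻ x, w x)) := by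
    intro w hw
    refine lintegral_tendsto_of_tendsto_of_monotone
      (fun k => (hw.min measurable_const).aemeasurable) ?_ ?_
    · refine Filter.Eventually.of_forall fun x i j hij => ?_
      dsimp only
      gcongr
    · refine Filter.Eventually.of_forall fun x => ?_
      have := (tendsto_const_nhds (x := w x)).min ENNReal.tendsto_nat_nhds_top
      simpa using this
  have hbdd : ∀ k : ℕ, (∫⁻ x, min (u x) k) ^ t * (∫⁻ x, min (v x) k) ^ s ≤ ∫⁻ x, h x := by
    intro k
    refine prekopaLeindler_real_of_bdd ht hs hts (hu.min measurable_const)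
      (hv.min measurable_const) hh ?_ ?_ fun x y => ?_
    · exact ((iSup_le fun x => min_le_right _ _).trans_lt (ENNReal.natCast_lt_top k)).ne
    · exact ((iSup_le fun x => min_le_right _ _).trans_lt (ENNReal.natCast_lt_top k)).ne
    · refine le_trans ?_ (H x y)
      gcongr <;> exact min_le_left _ _
  by_cases h0 : (∫⁻ x, u x) = 0 ∨ (∫⁻ x, v x) = 0
  · rcases h0 with h0 | h0 <;> simp [h0, ht, hs]
  push Not at h0
  have hpow : ∀ {a : ℝ≥0∞} {r : ℝ}, a ≠ 0 → 0 < r → a ^ r ≠ 0 := by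
    intro a r ha hr
    simp [ENNReal.rpow_eq_zero_iff, ha, hr.le]
  exact le_of_tendsto' (ENNReal.Tendsto.mul
    ((ENNReal.continuous_rpow_const.tendsto _).comp (hlim u hu)) (Or.inl (hpow h0.1 ht))
    ((ENNReal.continuous_rpow_const.tendsto _).comp (hlim v hv)) (Or.inl (hpow h0.2 hs))) hbdd

/-- Prékopa–Leindler tensorizes: apply it on the fibres, then to the marginals. -/
lemma PrekopaLeindler.prod {E F : Type*} [AddCommGroup E] [Module ℝ E] [MeasureSpace E]
    [AddCommGroup F] [Module ℝ F] [MeasureSpace F]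
    [SFinite (volume : Measure E)] [SFinite (volume : Measure F)] {t s : ℝ}
    (hE : PrekopaLeindler E t s) (hF : PrekopaLeindler F t s) :
    PrekopaLeindler (E × F) t s := by
  intro u v h hu hv hh H
  simp only [Measure.volume_eq_prod]
  rw [lintegral_prod _ hu.aemeasurable, lintegral_prod _ hv.aemeasurable,
    lintegral_prod _ hh.aemeasurable]
  refine hE _ _ _ hu.lintegral_prod_right' hv.lintegral_prod_right' hh.lintegral_prod_right' ?_
  intro x₁ x₂
  exact hF _ _ _ (hu.comp measurable_prodMk_left) (hv.comp measurable_prodMk_left)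
    (hh.comp measurable_prodMk_left) fun y₁ y₂ => H (x₁, y₁) (x₂, y₂)

lemma PrekopaLeindler.of_measurePreserving {E F : Type*} [AddCommGroup E] [Module ℝ E]
    [MeasureSpace E] [AddCommGroup F] [Module ℝ F] [MeasureSpace F] {t s : ℝ}
    (hE : PrekopaLeindler E t s) (e : E → F) (he : MeasurePreserving e)
    (hlin : ∀ x y, e (t • x + s • y) = t • e x + s • e y) :
    PrekopaLeindler F t s := by
  intro u v h hu hv hh H
  rw [← he.lintegral_comp hu, ← he.lintegral_comp hv, ← he.lintegral_comp hh]
  refine hE _ _ _ (hu.comp he.measurable) (hv.comp he.measurable) (hh.comp he.measurable) ?_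
  intro x y
  rw [hlin]
  exact H _ _

lemma prekopaLeindler_pi {t s : ℝ} (ht : 0 < t) (hs : 0 < s) (hts : t + s = 1) (n : ℕ) :
    PrekopaLeindler (Fin n → ℝ) t s := by
  induction n with
  | zero =>
    intro u v h hu hv hh H
    have hone : volume (univ : Set (Fin 0 → ℝ)) = 1 := by simp [volume_pi]
    have hconst : ∀ w : (Fin 0 → ℝ) → ℝ≥0∞, ∫⁻ x, w x = w 0 := by
      intro w
      rw [lintegral_congr fun x => congrArg w (Subsingleton.elim x 0), lintegral_const, hone,
        mul_one]
    rw [hconst, hconst, hconst]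
    simpa using H 0 0
  | succ n ih =>
    refine ((prekopaLeindler_real ht hs hts).prod ih).of_measurePreserving _
      (volume_preserving_piFinSuccAbove (fun _ : Fin (n + 1) => ℝ) 0).symm ?_
    intro x y
    ext i
    refine Fin.cases ?_ (fun j => ?_) i <;> simp [MeasurableEquiv.piFinSuccAbove]

lemma prekopaLeindler_euclideanSpace {t s : ℝ} (ht : 0 < t) (hs : 0 < s) (hts : t + s = 1)
    (n : ℕ) : PrekopaLeindler (EuclideanSpace ℝ (Fin n)) t s :=
  (prekopaLeindler_pi ht hs hts n).of_measurePreserving _ (PiLp.volume_preserving_toLp (Fin n))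
    fun _ _ => rfl

end PrekopaLeindler

/-! ### Concentration for strongly log-concave densities -/

/-- A density `p = e^{-φ}` with `φ` a `ρ`-convex function, possibly equal to `+∞` (where `p`
vanishes). The convexity inequality is written multiplicatively to avoid extended real values. -/
def StronglyLogConcave {E : Type*} [NormedAddCommGroup E] [NormedSpace ℝ E] (ρ : ℝ)
    (p : E → ℝ≥0∞) : Prop :=
  ∀ t s : ℝ, 0 < t → 0 < s → t + s = 1 → ∀ x y : E,
    p x ^ t * p y ^ s * ENNReal.ofReal (exp (ρ / 2 * t * s * ‖x - y‖ ^ 2)) ≤ p (t • x + s • y)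

section LogConcave

variable {n : ℕ} {ρ : ℝ} {p : EuclideanSpace ℝ (Fin n) → ℝ≥0∞}

/-- Prékopa–Leindler relative to a strongly log-concave measure, with a Gaussian gain in the
hypothesis. -/
lemma StronglyLogConcave.prekopaLeindler (hp : StronglyLogConcave ρ p) (hpm : Measurable p)
    {t s : ℝ} (ht : 0 < t) (hs : 0 < s) (hts : t + s = 1)
    {u v h : EuclideanSpace ℝ (Fin n) → ℝ≥0∞}
    (hu : Measurable u) (hv : Measurable v) (hh : Measurable h)
    (H : ∀ x y, u x ^ t * v y ^ s ≤
      h (t • x + s • y) * ENNReal.ofReal (exp (ρ / 2 * t * s * ‖x - y‖ ^ 2))) :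
    (∫⁻ x, u x ∂(volume.withDensity p)) ^ t * (∫⁻ x, v x ∂(volume.withDensity p)) ^ s
      ≤ ∫⁻ x, h x ∂(volume.withDensity p) := by
  rw [lintegral_withDensity_eq_lintegral_mul _ hpm hu,
    lintegral_withDensity_eq_lintegral_mul _ hpm hv,
    lintegral_withDensity_eq_lintegral_mul _ hpm hh]
  refine prekopaLeindler_euclideanSpace ht hs hts n _ _ _ (hpm.mul hu) (hpm.mul hv)
    (hpm.mul hh) fun x y => ?_
  simp only [Pi.mul_apply]
  rw [ENNReal.mul_rpow_of_nonneg _ _ ht.le, ENNReal.mul_rpow_of_nonneg _ _ hs.le,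
    mul_mul_mul_comm]
  calc p x ^ t * p y ^ s * (u x ^ t * v y ^ s)
      ≤ p x ^ t * p y ^ s * (h (t • x + s • y) *
          ENNReal.ofReal (exp (ρ / 2 * t * s * ‖x - y‖ ^ 2))) :=
        mul_le_mul' le_rfl (H x y)
    _ = p x ^ t * p y ^ s * ENNReal.ofReal (exp (ρ / 2 * t * s * ‖x - y‖ ^ 2)) *
          h (t • x + s • y) := by ring
    _ ≤ _ := by gcongr; exact hp t s ht hs hts x y

lemma ofReal_exp_rpow (a t : ℝ) : ENNReal.ofReal (exp a) ^ t = ENNReal.ofReal (exp (t * a)) := by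
  rw [ENNReal.ofReal_rpow_of_pos (exp_pos a), ← exp_mul, mul_comm]

/-- Exponential integrability of Lipschitz functions, from Prékopa–Leindler with weights `1/2`
applied to `e^F`, the indicator of a sublevel set `{F ≤ A}` of positive measure, and a constant:
for `F y ≤ A` one has `F x / 2 ≤ A / 2 + c |x - y| / 2`, and the last term is absorbed by the
Gaussian gain. -/
lemma StronglyLogConcave.integrable_exp (hρ : 0 < ρ) (hp : StronglyLogConcave ρ p)
    (hpm : Measurable p) [IsProbabilityMeasure (volume.withDensity p)]
    {F : EuclideanSpace ℝ (Fin n) → ℝ} {c : ℝ≥0} (hF : LipschitzWith c F) :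
    Integrable (fun x => exp (F x)) (volume.withDensity p) := by
  set μ := volume.withDensity p with hμ
  have hFm : Measurable F := hF.continuous.measurable
  obtain ⟨A, hA⟩ : ∃ A : ℕ, μ {x | F x ≤ A} ≠ 0 := by
    by_contra! hcon
    have h0 : μ (⋃ A : ℕ, {x | F x ≤ A}) = 0 := measure_iUnion_null hcon
    have huniv : (⋃ A : ℕ, {x | F x ≤ A}) = univ := by
      ext x
      simpa using exists_nat_ge (F x)
    rw [huniv] at h0
    simp at h0
  set S := {x | F x ≤ A} with hS
  have hSm : MeasurableSet S := measurableSet_le hFm measurable_const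
  set M : ℝ := A / 2 + c ^ 2 / (2 * ρ) with hM
  have key := hp.prekopaLeindler hpm (t := 1 / 2) (s := 1 / 2) (by norm_num) (by norm_num)
    (by norm_num) (u := fun x => ENNReal.ofReal (exp (F x))) (v := S.indicator 1)
    (h := fun _ => ENNReal.ofReal (exp M)) hFm.exp.ennreal_ofReal
    (measurable_one.indicator hSm) measurable_const (by
      intro x y
      by_cases hy : y ∈ S
      · simp only [hy, indicator_of_mem, Pi.one_apply, ENNReal.one_rpow, mul_one]
        rw [ofReal_exp_rpow, ← ENNReal.ofReal_mul (exp_nonneg _), ← exp_add]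
        gcongr
        have h1 : F x - F y ≤ c * ‖x - y‖ := by
          have := hF.dist_le_mul x y
          rw [Real.dist_eq, dist_eq_norm] at this
          exact (le_abs_self _).trans this
        have h2 : F y ≤ A := hy
        have h3 : 1 / 2 * (c * ‖x - y‖) ≤ c ^ 2 / (2 * ρ)
            + ρ / 2 * (1 / 2) * (1 / 2) * ‖x - y‖ ^ 2 := by
          have : c ^ 2 / (2 * ρ) + ρ / 2 * (1 / 2) * (1 / 2) * ‖x - y‖ ^ 2
              - 1 / 2 * (c * ‖x - y‖) = (2 * c - ρ * ‖x - y‖) ^ 2 / (8 * ρ) := by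
            field_simp
            ring
          have h4 : 0 ≤ (2 * c - ρ * ‖x - y‖) ^ 2 / (8 * ρ) := by positivity
          linarith
        rw [hM]
        linarith
      · simp [hy])
  refine ⟨hFm.exp.aestronglyMeasurable, ?_⟩
  rw [hasFiniteIntegral_iff_ofReal (Filter.Eventually.of_forall fun x => exp_nonneg _)]
  rw [lintegral_indicator_one hSm, lintegral_const] at key
  by_contra htop
  rw [not_lt, top_le_iff] at htop
  rw [htop, ENNReal.top_rpow_of_pos (by norm_num), ENNReal.top_mul (by
    simp only [ne_eq, ENNReal.rpow_eq_zero_iff, not_or, not_and_or]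
    exact ⟨Or.inl hA, Or.inr (by norm_num)⟩)] at key
  simp at key

/-- Prékopa–Leindler applied to `e^F`, `1` and `e^{t F + t s c² / (2ρ)}`. -/
lemma StronglyLogConcave.mgf_rpow_le (hρ : 0 < ρ) (hp : StronglyLogConcave ρ p)
    (hpm : Measurable p) [IsProbabilityMeasure (volume.withDensity p)]
    {F : EuclideanSpace ℝ (Fin n) → ℝ} {c : ℝ≥0} (hF : LipschitzWith c F)
    {t s : ℝ} (ht : 0 < t) (hs : 0 < s) (hts : t + s = 1) :
    (∫⁻ x, ENNReal.ofReal (exp (F x)) ∂(volume.withDensity p)) ^ t ≤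
      ENNReal.ofReal (exp (t * s * c ^ 2 / (2 * ρ))) *
        ∫⁻ x, ENNReal.ofReal (exp (t * F x)) ∂(volume.withDensity p) := by
  have hFm : Measurable F := hF.continuous.measurable
  have hm : Measurable fun x => ENNReal.ofReal (exp (t * F x)) :=
    (hFm.const_mul t).exp.ennreal_ofReal
  have key := hp.prekopaLeindler hpm ht hs hts (u := fun x => ENNReal.ofReal (exp (F x)))
    (v := 1)
    (h := fun x => ENNReal.ofReal (exp (t * s * c ^ 2 / (2 * ρ))) * ENNReal.ofReal (exp (t * F x)))
    hFm.exp.ennreal_ofReal measurable_one (hm.const_mul _) (by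
      intro x y
      simp only [Pi.one_apply, ENNReal.one_rpow, mul_one]
      rw [ofReal_exp_rpow, ← ENNReal.ofReal_mul (exp_nonneg _), ← exp_add,
        ← ENNReal.ofReal_mul (exp_nonneg _), ← exp_add]
      gcongr
      have h1 : F x - F (t • x + s • y) ≤ c * (s * ‖x - y‖) := by
        have h := hF.dist_le_mul x (t • x + s • y)
        have hxz : x - (t • x + s • y) = s • (x - y) := by
          have : t = 1 - s := by linarith
          subst this
          module
        rw [Real.dist_eq, dist_eq_norm, hxz, norm_smul, Real.norm_of_nonneg hs.le] at h
        exact (le_abs_self _).trans h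
      have h2 : t * (F x - F (t • x + s • y)) ≤ t * (c * (s * ‖x - y‖)) := by gcongr
      have h3 : t * (c * (s * ‖x - y‖)) ≤ t * s * c ^ 2 / (2 * ρ)
          + ρ / 2 * t * s * ‖x - y‖ ^ 2 := by
        have : t * s * c ^ 2 / (2 * ρ) + ρ / 2 * t * s * ‖x - y‖ ^ 2
            - t * (c * (s * ‖x - y‖)) = t * s * (c - ρ * ‖x - y‖) ^ 2 / (2 * ρ) := by
          field_simp
          ring
        have h4 : 0 ≤ t * s * (c - ρ * ‖x - y‖) ^ 2 / (2 * ρ) := by positivity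
        linarith
      linarith)
  rw [lintegral_const_mul _ hm] at key
  simpa using key

open ProbabilityTheory in
/-- `mgf_rpow_le` reads `cgf 1 ≤ cgf t / t + (1 - t) c² / (2ρ)`, and `cgf t / t` tends to the
mean of `F` as `t → 0⁺`. -/
lemma StronglyLogConcave.cgf_one_le (hρ : 0 < ρ) (hp : StronglyLogConcave ρ p)
    (hpm : Measurable p) [IsProbabilityMeasure (volume.withDensity p)]
    {F : EuclideanSpace ℝ (Fin n) → ℝ} {c : ℝ≥0} (hF : LipschitzWith c F) :
    cgf F (volume.withDensity p) 1 ≤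
      ∫ x, F x ∂(volume.withDensity p) + c ^ 2 / (2 * ρ) := by
  set μ := volume.withDensity p with hμ
  have hexp : ∀ l : ℝ, Integrable (fun x => exp (l * F x)) μ := fun l =>
    hp.integrable_exp hρ hpm (c := ‖l‖₊ * c) ((lipschitzWith_smul l).comp hF)
  have hstep : ∀ t ∈ Ioo (0 : ℝ) 1,
      cgf F μ 1 - (1 - t) * (c ^ 2 / (2 * ρ)) ≤ t⁻¹ * cgf F μ t := by
    rintro t ⟨ht, ht1⟩
    have h := hp.mgf_rpow_le hρ hpm hF ht (sub_pos.2 ht1) (by ring)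
    have hint : Integrable (fun x => exp (F x)) μ := by simpa using hexp 1
    rw [← hμ, ← ofReal_integral_eq_lintegral_ofReal hint
        (Filter.Eventually.of_forall fun x => exp_nonneg _),
      ← ofReal_integral_eq_lintegral_ofReal (hexp t)
        (Filter.Eventually.of_forall fun x => exp_nonneg _)] at h
    have hm1 : ∫ x, exp (F x) ∂μ = exp (cgf F μ 1) := by
      rw [exp_cgf (hexp 1)]; simp [mgf]
    have hmt : ∫ x, exp (t * F x) ∂μ = exp (cgf F μ t) := by
      rw [exp_cgf (hexp t)]; simp [mgf]
    rw [hm1, hmt, ofReal_exp_rpow, ← ENNReal.ofReal_mul (exp_nonneg _), ← exp_add,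
      ENNReal.ofReal_le_ofReal_iff (exp_nonneg _), exp_le_exp] at h
    rw [le_inv_mul_iff₀ ht]
    calc t * (cgf F μ 1 - (1 - t) * (c ^ 2 / (2 * ρ)))
        = t * cgf F μ 1 - t * (1 - t) * c ^ 2 / (2 * ρ) := by ring
      _ ≤ cgf F μ t := by linarith
  have huniv : integrableExpSet F μ = univ := by
    ext l
    simpa [integrableExpSet] using hexp l
  have h0 : (0 : ℝ) ∈ interior (integrableExpSet F μ) := by simp [huniv]
  have hderiv : HasDerivAt (cgf F μ) (∫ x, F x ∂μ) 0 := by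
    have h := (analyticAt_cgf h0).differentiableAt.hasDerivAt
    rwa [deriv_cgf_zero h0, probReal_univ, div_one] at h
  have hslope := hderiv.tendsto_slope_zero_right
  simp only [zero_add, cgf_zero, sub_zero, smul_eq_mul] at hslope
  have hleft : Filter.Tendsto (fun t : ℝ => cgf F μ 1 - (1 - t) * (c ^ 2 / (2 * ρ)))
      (nhdsWithin 0 (Ioi 0)) (nhds (cgf F μ 1 - (1 - 0) * (c ^ 2 / (2 * ρ)))) :=
    (Continuous.tendsto (by fun_prop) 0).mono_left nhdsWithin_le_nhds
  have hle := le_of_tendsto_of_tendsto hleft hslope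
    (Filter.eventually_of_mem (Ioo_mem_nhdsGT one_pos) hstep)
  linarith

open ProbabilityTheory in
lemma StronglyLogConcave.hasSubgaussianMGF (hρ : 0 < ρ) (hp : StronglyLogConcave ρ p)
    (hpm : Measurable p) [IsProbabilityMeasure (volume.withDensity p)]
    {F : EuclideanSpace ℝ (Fin n) → ℝ} {c : ℝ≥0} (hF : LipschitzWith c F) :
    HasSubgaussianMGF (fun x => F x - ∫ y, F y ∂(volume.withDensity p))
      (c ^ 2 / ρ.toNNReal) (volume.withDensity p) := by
  set μ := volume.withDensity p with hμ
  have hlip : ∀ l : ℝ, LipschitzWith (‖l‖₊ * c) (fun x => l * F x) := fun l =>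
    (lipschitzWith_smul l).comp hF
  have hexp : ∀ l : ℝ, Integrable (fun x => exp (l * F x)) μ := fun l =>
    hp.integrable_exp hρ hpm (hlip l)
  have hsplit : ∀ l x, exp (l * (F x - ∫ y, F y ∂μ))
      = exp (l * F x) * exp (-(l * ∫ y, F y ∂μ)) := by
    intro l x
    rw [← exp_add]
    ring_nf
  refine ⟨fun l => ?_, fun l => ?_⟩
  · simp_rw [hsplit]
    exact (hexp l).mul_const _
  · have hcgf := hp.cgf_one_le hρ hpm (hlip l)
    rw [← hμ, integral_const_mul] at hcgf
    have hmgf : ∫ x, exp (l * F x) ∂μ = exp (cgf (fun x => l * F x) μ 1) := by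
      rw [exp_cgf (by simpa using hexp l)]; simp [mgf]
    simp only [mgf, hsplit]
    rw [integral_mul_const, hmgf, ← exp_add, exp_le_exp]
    have hcoef : (((‖l‖₊ * c : ℝ≥0) : ℝ)) ^ 2 / (2 * ρ)
        = ((c ^ 2 / ρ.toNNReal : ℝ≥0) : ℝ) * l ^ 2 / 2 := by
      push_cast
      rw [Real.coe_toNNReal ρ hρ.le, mul_pow, Real.norm_eq_abs, sq_abs]
      field_simp
    rw [hcoef] at hcgf
    linarith

lemma StronglyLogConcave.measure_abs_sub_ge_le (hρ : 0 < ρ) (hp : StronglyLogConcave ρ p)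
    (hpm : Measurable p) [IsProbabilityMeasure (volume.withDensity p)]
    {F : EuclideanSpace ℝ (Fin n) → ℝ} {c : ℝ≥0} (hF : LipschitzWith c F) {r : ℝ} (hr : 0 ≤ r) :
    volume.withDensity p {x | r ≤ |F x - ∫ y, F y ∂(volume.withDensity p)|} ≤
      ENNReal.ofReal (2 * exp (-r ^ 2 / (2 * (c ^ 2 / ρ)))) := by
  set μ := volume.withDensity p with hμ
  have hsub := hp.hasSubgaussianMGF hρ hpm hF
  have h1 := hsub.measure_ge_le hr
  have h2 := hsub.neg.measure_ge_le hr
  have hc : ((c ^ 2 / ρ.toNNReal : ℝ≥0) : ℝ) = c ^ 2 / ρ := by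
    push_cast
    rw [Real.coe_toNNReal ρ hρ.le]
  rw [hc] at h1 h2
  rw [← ofReal_measureReal]
  refine ENNReal.ofReal_le_ofReal ?_
  calc μ.real {x | r ≤ |F x - ∫ y, F y ∂μ|}
      ≤ μ.real ({x | r ≤ F x - ∫ y, F y ∂μ} ∪
          {x | r ≤ (-fun x => F x - ∫ y, F y ∂μ) x}) := by
        refine measureReal_mono ?_
        intro x hx
        exact le_abs.1 (show r ≤ |F x - ∫ y, F y ∂μ| from hx)
    _ ≤ _ := measureReal_union_le _ _
    _ ≤ _ := by rw [two_mul]; exact add_le_add h1 h2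

end LogConcave

/-! ### Linear statistics and the Gibbs density -/

/-- The factor `1/√n` comes from the Cauchy–Schwarz inequality. -/
lemma lipschitzWith_linearStatistic {n : ℕ} (hn : 0 < n) {f : ℝ → ℝ} {K : ℝ≥0}
    (hf : LipschitzWith K f) :
    LipschitzWith (K / NNReal.sqrt n)
      (fun x : EuclideanSpace ℝ (Fin n) => (1 / (n : ℝ)) * ∑ i, f (x i)) := by
  refine LipschitzWith.of_dist_le_mul fun x y => ?_
  have hn' : (0 : ℝ) < n := by exact_mod_cast hn
  have hcs : ∑ i, |x i - y i| ≤ √n * dist x y := by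
    have h := Real.sum_mul_le_sqrt_mul_sqrt Finset.univ (fun _ : Fin n => (1 : ℝ))
      (fun i => |x i - y i|)
    simpa [EuclideanSpace.dist_eq, Real.dist_eq] using h
  have hsq : √(n : ℝ) * √n = n := Real.mul_self_sqrt hn'.le
  have hs : 0 < √(n : ℝ) := Real.sqrt_pos.2 hn'
  calc dist ((1 / (n : ℝ)) * ∑ i, f (x i)) ((1 / (n : ℝ)) * ∑ i, f (y i))
      = (1 / (n : ℝ)) * |∑ i, (f (x i) - f (y i))| := by
        rw [Real.dist_eq, ← mul_sub, abs_mul, abs_of_pos (by positivity),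
          Finset.sum_sub_distrib]
    _ ≤ (1 / (n : ℝ)) * ∑ i, |f (x i) - f (y i)| := by
        gcongr; exact Finset.abs_sum_le_sum_abs _ _
    _ ≤ (1 / (n : ℝ)) * ∑ i, K * |x i - y i| := by
        gcongr with i
        simpa [Real.dist_eq] using hf.dist_le_mul (x i) (y i)
    _ ≤ (1 / (n : ℝ)) * (K * (√n * dist x y)) := by
        rw [← Finset.mul_sum]; gcongr
    _ = ((K / NNReal.sqrt n : ℝ≥0) : ℝ) * dist x y := by
        push_cast
        field_simp
        rw [sq, hsq, mul_comm (K : ℝ)]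

lemma norm_sq_convexComb {E : Type*} [NormedAddCommGroup E] [InnerProductSpace ℝ E] {t s : ℝ}
    (hts : t + s = 1) (x y : E) :
    ‖t • x + s • y‖ ^ 2 = t * ‖x‖ ^ 2 + s * ‖y‖ ^ 2 - t * s * ‖x - y‖ ^ 2 := by
  rw [norm_add_sq_real, norm_sub_sq_real, norm_smul, norm_smul, inner_smul_left, inner_smul_right,
    mul_pow, mul_pow, Real.norm_eq_abs, Real.norm_eq_abs, sq_abs, sq_abs]
  obtain rfl : s = 1 - t := by linarith
  simp only [conj_trivial]
  ring

section Gibbs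

variable {n : ℕ} {ρ : ℝ} {V : EuclideanSpace ℝ (Fin n) → ℝ} {W : ℝ → ℝ}

/-- The energy is `ρ`-convex on the chamber `{x₁ > x₂ > … > xₙ}`. -/
lemma energy_convexComb_le
    (hV : ConvexOn ℝ Set.univ (fun x => V x - ρ / 2 * ‖x‖ ^ 2))
    (hW : ConvexOn ℝ (Set.Ioi (0 : ℝ)) W)
    {U : EuclideanSpace ℝ (Fin n) → ℝ}
    (hU : ∀ x, U x = V x + ∑ i : Fin n, ∑ j : Fin n, if i < j then W (x i - x j) else 0)
    {t s : ℝ} (ht : 0 < t) (hs : 0 < s) (hts : t + s = 1) {x y : EuclideanSpace ℝ (Fin n)}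
    (hx : ∀ i j : Fin n, i < j → x j < x i) (hy : ∀ i j : Fin n, i < j → y j < y i) :
    U (t • x + s • y) ≤ t * U x + s * U y - ρ / 2 * t * s * ‖x - y‖ ^ 2 := by
  have h1 : V (t • x + s • y) ≤ t * V x + s * V y - ρ / 2 * t * s * ‖x - y‖ ^ 2 := by
    have h := hV.2 (mem_univ x) (mem_univ y) ht.le hs.le hts
    simp only [smul_eq_mul] at h
    rw [norm_sq_convexComb hts] at h
    linarith
  have h2 : (∑ i : Fin n, ∑ j : Fin n,
        if i < j then W ((t • x + s • y) i - (t • x + s • y) j) else 0) ≤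
      t * (∑ i : Fin n, ∑ j : Fin n, if i < j then W (x i - x j) else 0) +
      s * (∑ i : Fin n, ∑ j : Fin n, if i < j then W (y i - y j) else 0) := by
    simp only [Finset.mul_sum, ← Finset.sum_add_distrib]
    refine Finset.sum_le_sum fun i _ => Finset.sum_le_sum fun j _ => ?_
    split_ifs with hij
    · have h := hW.2 (x := x i - x j) (y := y i - y j) (sub_pos.2 (hx i j hij))
        (sub_pos.2 (hy i j hij)) ht.le hs.le hts
      simp only [smul_eq_mul] at h
      convert h using 2
      simp only [PiLp.add_apply, PiLp.smul_apply, smul_eq_mul]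
      ring
    · simp
  rw [hU, hU, hU]
  linarith

lemma isOpen_weylChamber :
    IsOpen {x : EuclideanSpace ℝ (Fin n) | ∀ i j : Fin n, i < j → x j < x i} := by
  simp only [Set.ofPred_forall]
  refine isOpen_iInter_of_finite fun i => isOpen_iInter_of_finite fun j =>
    isOpen_iInter_of_finite fun _ => isOpen_lt (by fun_prop) (by fun_prop)

lemma continuousOn_energy
    (hV : ConvexOn ℝ Set.univ (fun x => V x - ρ / 2 * ‖x‖ ^ 2))
    (hW : ConvexOn ℝ (Set.Ioi (0 : ℝ)) W)
    {U : EuclideanSpace ℝ (Fin n) → ℝ}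
    (hU : ∀ x, U x = V x + ∑ i : Fin n, ∑ j : Fin n, if i < j then W (x i - x j) else 0) :
    ContinuousOn U {x | ∀ i j : Fin n, i < j → x j < x i} := by
  have hVc : Continuous V := by
    have h : Continuous (fun x => V x - ρ / 2 * ‖x‖ ^ 2) :=
      continuousOn_univ.1 (hV.continuousOn isOpen_univ)
    have h' : V = fun x => (V x - ρ / 2 * ‖x‖ ^ 2) + ρ / 2 * ‖x‖ ^ 2 := by
      ext x; ring
    rw [h']
    exact h.add (by fun_prop)
  rw [funext hU]
  refine hVc.continuousOn.add (continuousOn_finsetSum _ fun i _ =>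
    continuousOn_finsetSum _ fun j _ => ?_)
  split_ifs with hij
  · exact (hW.continuousOn isOpen_Ioi).comp (by fun_prop) fun x hx => sub_pos.2 (hx i j hij)
  · exact continuousOn_const

end Gibbs

/-- **Gaussian concentration for Lipschitz functions**: for a Boltzmann–Gibbs measure
`μ` on `ℝⁿ` with `ρ`-convex confinement `V` and convex singular interaction `W`
(domain `(0,∞)`), the linear statistics `L_n(f)(x) = (1/n) Σᵢ f(xᵢ)` of any `K`-Lipschitz function
`f : ℝ → ℝ` satisfies, for all `r > 0`,
`μ(|L_n(f) - ∫ L_n(f) dμ| ≥ r) ≤ 2 exp(-n ρ r² / (2K²))`. -/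
theorem gaussian_concentration_linear_statistics
    {n : ℕ} (hn : 0 < n) (ρ : ℝ) (hρ : 0 < ρ)
    (V : EuclideanSpace ℝ (Fin n) → ℝ) (W : ℝ → ℝ)
    (hV : ConvexOn ℝ Set.univ (fun x => V x - ρ / 2 * ‖x‖ ^ 2))
    (hW : ConvexOn ℝ (Set.Ioi (0 : ℝ)) W)
    (U : EuclideanSpace ℝ (Fin n) → ℝ)
    (hU : ∀ x, U x = V x + ∑ i : Fin n, ∑ j : Fin n, if i < j then W (x i - x j) else 0)
    (D : Set (EuclideanSpace ℝ (Fin n)))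
    (hD : D = {x | ∀ i j : Fin n, i < j → x j < x i})
    (dens : EuclideanSpace ℝ (Fin n) → ℝ)
    (hdens : dens = D.indicator fun x => Real.exp (-U x))
    (hint : Integrable dens volume)
    (Z : ℝ) (hZ : Z = ∫ x, dens x) (hZpos : 0 < Z)
    (μ : Measure (EuclideanSpace ℝ (Fin n)))
    (hμ : μ = volume.withDensity fun x => ENNReal.ofReal (dens x / Z))
    (f : ℝ → ℝ) (K : ℝ≥0) (hK : 0 < K)
    (hf : LipschitzWith K f)
    (L : (ℝ → ℝ) → EuclideanSpace ℝ (Fin n) → ℝ)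
    (hL : ∀ g x, L g x = (1 / (n : ℝ)) * ∑ i : Fin n, g (x i))
    (r : ℝ) (hr : 0 < r) :
    μ {x | r ≤ |L f x - ∫ y, L f y ∂μ|}
      ≤ ENNReal.ofReal (2 * Real.exp (-(n : ℝ) * (ρ / (K : ℝ) ^ 2) * r ^ 2 / 2)) := by
  have hdm : Measurable dens := by
    classical
    rw [hdens, ← piecewise_eq_indicator]
    refine ContinuousOn.measurable_piecewise (Real.continuous_exp.comp_continuousOn ?_)
      continuousOn_const (hD ▸ isOpen_weylChamber.measurableSet)
    exact (hD ▸ continuousOn_energy hV hW hU).neg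
  set p : EuclideanSpace ℝ (Fin n) → ℝ≥0∞ := fun x => ENNReal.ofReal (dens x / Z) with hp
  have hpm : Measurable p := (hdm.div_const Z).ennreal_ofReal
  have hprob : IsProbabilityMeasure (volume.withDensity p) := by
    refine ⟨?_⟩
    have hnn : ∀ x, 0 ≤ dens x := fun x => by
      rw [hdens]; exact indicator_nonneg (fun _ _ => exp_nonneg _) x
    rw [withDensity_apply _ MeasurableSet.univ, Measure.restrict_univ,
      ← ofReal_integral_eq_lintegral_ofReal (hint.div_const Z)
        (Filter.Eventually.of_forall fun x => div_nonneg (hnn x) hZpos.le),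
      integral_div, ← hZ, div_self hZpos.ne', ENNReal.ofReal_one]
  have hpin : ∀ x ∈ D, p x = ENNReal.ofReal (exp (-U x - log Z)) := by
    intro x hx
    rw [exp_sub, exp_log hZpos]
    simp [hp, hdens, hx]
  have hpout : ∀ x, x ∉ D → p x = 0 := by
    intro x hx
    simp [hp, hdens, hx]
  have hconc : StronglyLogConcave ρ p := by
    intro t s ht hs hts x y
    by_cases hx : x ∈ D
    · by_cases hy : y ∈ D
      · have hx' := hx
        have hy' := hy
        rw [hD] at hx' hy'
        have hz : t • x + s • y ∈ D := by
          rw [hD]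
          intro i j hij
          have h1 := mul_lt_mul_of_pos_left (hx' i j hij) ht
          have h2 := mul_lt_mul_of_pos_left (hy' i j hij) hs
          simpa using add_lt_add h1 h2
        rw [hpin x hx, hpin y hy, hpin _ hz, ofReal_exp_rpow, ofReal_exp_rpow,
          ← ENNReal.ofReal_mul (exp_nonneg _), ← exp_add,
          ← ENNReal.ofReal_mul (exp_nonneg _), ← exp_add]
        gcongr
        have hlog : t * log Z + s * log Z = log Z := by rw [← add_mul, hts, one_mul]
        have h := energy_convexComb_le hV hW hU ht hs hts hx' hy'
        linarith
      · simp [hpout y hy, hs]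
    · simp [hpout x hx, ht]
  have hLf : L f = fun x => (1 / (n : ℝ)) * ∑ i, f (x i) := funext (hL f)
  have hlip : LipschitzWith (K / NNReal.sqrt n) (L f) := by
    rw [hLf]; exact lipschitzWith_linearStatistic hn hf
  have hmain := hconc.measure_abs_sub_ge_le hρ hpm hlip hr.le
  have hn' : (0 : ℝ) < n := by exact_mod_cast hn
  have hK' : (0 : ℝ) < K := by exact_mod_cast hK
  have hexponent : -r ^ 2 / (2 * (((K / NNReal.sqrt n : ℝ≥0) : ℝ) ^ 2 / ρ))
      = -(n : ℝ) * (ρ / (K : ℝ) ^ 2) * r ^ 2 / 2 := by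
    push_cast
    rw [div_pow, Real.sq_sqrt hn'.le]
    field_simp
  rw [hexponent] at hmain
  rw [hμ]
  exact hmain
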